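/- Let μ be a Borel probability measure on ℝ such that |μ̂(ξ)| = O(|ξ|^{−γ}) as |ξ| → ∞ for some γ > 0. Then for every strictly increasing sequence (s_n)_{n≥1} of positive integers, for μ-almost every x the sequence (s_n x)_{n≥1} is equidistributed modulo 1; in particular, μ-almost every x is normal in every integer base b ≥ 2. -/

import Mathlib

/-!
With `S_N(x) = ∑_{n ≤ N} e^{2πi h s_n x}`, expanding the square gives
`∫ |S_N|² dμ = ∑_{m, n ≤ N} μ̂(h (s_m - s_n))`. Since `|s_m - s_n|` is at least a constant times
`|m - n|`, a decay `|μ̂(ξ)| ≲ (1 + |ξ|)^{-δ}` with `0 < δ < 1` bounds this by a multiple of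
`N^{2 - δ}`. Hence `∫ |S_N / N|² dμ` is summable along `N = k^p` when `p δ > 1`, so `S_N / N → 0`
almost everywhere along that subsequence. As consecutive values of `k^p` have ratio tending to `1`
and the terms of `S_N` are bounded, the convergence extends to all `N`, and Weyl's criterion
concludes.
-/

open MeasureTheory Real Filter Asymptotics

/-- A sequence `(x n)_{n ≥ 1}` of real numbers is equidistributed modulo 1: for every
subinterval `[a, b] ⊆ [0, 1]`, the proportion of indices `1 ≤ n ≤ N` whose fractional
part lies in `[a, b]` tends to `b - a`. -/
def EquidistributedMod1 (x : ℕ → ℝ) : Prop :=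
  ∀ a b : ℝ, 0 ≤ a → a ≤ b → b ≤ 1 →
    Tendsto (fun N : ℕ =>
        (((Finset.Icc 1 N).filter fun n => Int.fract (x n) ∈ Set.Icc a b).card : ℝ) / N)
      atTop (nhds (b - a))

section WeakConvergence

open BoundedContinuousFunction

theorem tendsto_of_tendsto_integral_fourier {T : ℝ} [Fact (0 < T)] {ι : Type*} {l : Filter ι}
    {P : ι → ProbabilityMeasure (AddCircle T)} {P₀ : ProbabilityMeasure (AddCircle T)}
    (hP : ∀ h : ℤ, Tendsto (fun i => ∫ t, fourier h t ∂(P i : Measure (AddCircle T))) l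
      (nhds (∫ t, fourier h t ∂(P₀ : Measure (AddCircle T))))) :
    Tendsto P l (nhds P₀) := by
  let A := (fourierSubalgebra (T := T)).comap (toContinuousMapStarₐ ℂ)
  have hA : (A.map (toContinuousMapStarₐ ℂ)).SeparatesPoints := fun x y hxy => by
    obtain ⟨_, ⟨f, hf, rfl⟩, hfxy⟩ := fourierSubalgebra_separatesPoints hxy
    exact ⟨f, ⟨f, ⟨mkOfCompact f, hf, rfl⟩, rfl⟩, hfxy⟩
  refine ProbabilityMeasure.tendsto_of_tight_of_separatesPoints ℂ
    IsTightMeasureSet.of_compactSpace hA fun g hg => ?_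
  have hint (f : C(AddCircle T, ℂ)) (Q : ProbabilityMeasure (AddCircle T)) : Integrable f Q :=
    f.continuous.integrable_of_hasCompactSupport (HasCompactSupport.of_compactSpace f)
  have hconv (f : C(AddCircle T, ℂ)) (hf : f ∈ Submodule.span ℂ (Set.range (@fourier T))) :
      Tendsto (fun i => ∫ t, f t ∂(P i : Measure (AddCircle T))) l
        (nhds (∫ t, f t ∂(P₀ : Measure (AddCircle T)))) := by
    induction hf using Submodule.span_induction with
    | mem f hf =>
      obtain ⟨h, rfl⟩ := hf
      exact hP h
    | zero => simpa using tendsto_const_nhds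
    | add f₁ f₂ _ _ h₁ h₂ =>
      simpa [integral_add (hint _ _) (hint _ _)] using h₁.add h₂
    | smul c f _ hf => simpa [integral_const_mul] using hf.const_mul c
  refine hconv g ?_
  rw [← fourierSubalgebra_coe]
  exact hg

end WeakConvergence

section EmpiricalMeasure

open scoped ENNReal

variable {ι α : Type*} [MeasurableSpace α]

/-- The empirical measure of the points `y i`, `i ∈ s`: the average of their Dirac masses. Its weak
limits describe the distribution of a sequence; it is the zero measure when `s = ∅`. -/
noncomputable def empiricalMeasure (s : Finset ι) (y : ι → α) : Measure α :=
  (s.card : ℝ≥0∞)⁻¹ • ∑ i ∈ s, Measure.dirac (y i)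

theorem isProbabilityMeasure_empiricalMeasure {s : Finset ι} (hs : s.Nonempty) (y : ι → α) :
    IsProbabilityMeasure (empiricalMeasure s y) where
  measure_univ := by
    simp [empiricalMeasure, ENNReal.inv_mul_cancel, hs.ne_empty]

theorem integral_empiricalMeasure [MeasurableSingletonClass α] {E : Type*} [NormedAddCommGroup E]
    [NormedSpace ℝ E] [CompleteSpace E] (s : Finset ι) (y : ι → α) (f : α → E) :
    ∫ t, f t ∂empiricalMeasure s y = (s.card : ℝ)⁻¹ • ∑ i ∈ s, f (y i) := by
  rw [empiricalMeasure, integral_smul_measure,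
    integral_finsetSum_measure fun i _ => integrable_dirac (by finiteness)]
  simp

open Classical in
theorem measureReal_empiricalMeasure (s : Finset ι) (y : ι → α) {A : Set α}
    (hA : MeasurableSet A) :
    (empiricalMeasure s y).real A = ({i ∈ s | y i ∈ A}.card : ℝ) / s.card := by
  simp [empiricalMeasure, measureReal_def, Measure.dirac_apply' _ hA, Set.indicator_apply,
    div_eq_inv_mul, Finset.sum_boole]

end EmpiricalMeasure

section UnitAddCircle

theorem integral_fourier_of_ne_zero {h : ℤ} (hh : h ≠ 0) :
    ∫ t : UnitAddCircle, fourier h t = 0 := by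
  simpa [fourierCoeff, AddCircle.integral_haarAddCircle, Pi.single_eq_of_ne hh.symm] using
    congrFun (fourierCoeff_fourier (T := 1) h) 0

theorem mem_frontier_of_mem_frontier_preimage {X Y : Type*} [TopologicalSpace X]
    [TopologicalSpace Y] {f : X → Y} {x : X} {s : Set Y} (hf : ContinuousAt f x)
    (hx : x ∈ frontier (f ⁻¹' s)) : f x ∈ frontier s := by
  rw [frontier_eq_closure_inter_closure] at hx ⊢
  have hclosure {t : Set Y} (h : x ∈ closure (f ⁻¹' t)) : f x ∈ closure t :=
    mem_closure_iff_frequently.2 (hf.frequently (mem_closure_iff_frequently.1 h))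
  exact hx.imp hclosure hclosure

/-- The arc of the circle `ℝ / ℤ` made of the classes whose representative in `[0, 1)` lies in
`[a, b]`; membership of `x n` in it is the event counted by `EquidistributedMod1`. -/
def unitArc (a b : ℝ) : Set UnitAddCircle :=
  {z | (AddCircle.equivIco 1 0 z : ℝ) ∈ Set.Icc a b}

variable {a b : ℝ}

theorem coe_mem_unitArc_iff {t : ℝ} :
    (t : UnitAddCircle) ∈ unitArc a b ↔ Int.fract t ∈ Set.Icc a b := by
  simp [unitArc, AddCircle.coe_equivIco_mk_apply]

theorem measurableSet_unitArc : MeasurableSet (unitArc a b) :=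
  (measurable_subtype_coe.comp (AddCircle.measurableEquivIco 1 0).measurable) measurableSet_Icc

theorem volume_frontier_unitArc (hab : a ≤ b) : volume (frontier (unitArc a b)) = 0 := by
  let rep (z : UnitAddCircle) : ℝ := AddCircle.equivIco 1 0 z
  have hrep {z : UnitAddCircle} (hz : z ≠ 0) : ContinuousAt rep z :=
    continuous_subtype_val.continuousAt.comp (AddCircle.continuousAt_equivIco 1 0 hz)
  have hsub : frontier (unitArc a b) ⊆ insert 0 (rep ⁻¹' {a, b}) := fun z hz => by
    rw [← frontier_Icc hab]
    exact or_iff_not_imp_left.2 fun hz0 => mem_frontier_of_mem_frontier_preimage (hrep hz0) hz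
  have hinj : Function.Injective rep :=
    Subtype.val_injective.comp (AddCircle.equivIco 1 0).injective
  have : NullSingletonClass (volume : Measure UnitAddCircle) :=
    ⟨fun z => by simpa using AddCircle.volume_closedBall 1 (x := z) 0⟩
  exact ((((Set.toFinite {a, b}).preimage hinj.injOn).insert 0).subset hsub).measure_zero _

theorem volume_unitArc (ha : 0 ≤ a) (hb : b ≤ 1) :
    volume (unitArc a b) = ENNReal.ofReal (b - a) := by
  have hcover : volume (unitArc a b) =
      volume.restrict (Set.Ico 0 1) (((↑) : ℝ → UnitAddCircle) ⁻¹' unitArc a b) := by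
    rw [← (UnitAddCircle.measurePreserving_mk 0).measure_preimage
      measurableSet_unitArc.nullMeasurableSet, zero_add, restrict_Ico_eq_restrict_Ioc]
  have hfract : ((↑) : ℝ → UnitAddCircle) ⁻¹' unitArc a b ∩ Set.Ico 0 1 =
      Set.Icc a b ∩ Set.Ico 0 1 := by
    ext t
    refine and_congr_left fun ht => ?_
    rw [Set.mem_preimage, coe_mem_unitArc_iff, Int.fract_eq_self.2 ht]
  rw [hcover, Measure.restrict_apply' measurableSet_Ico, hfract]
  apply le_antisymm
  · rw [← Real.volume_Icc]
    exact measure_mono Set.inter_subset_left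
  · rw [← Real.volume_Ico]
    exact measure_mono fun t ht =>
      ⟨Set.Ico_subset_Icc_self ht, ha.trans ht.1, ht.2.trans_le hb⟩

end UnitAddCircle

section Weyl

variable {x : ℕ → ℝ}

theorem tendsto_measureReal_empiricalMeasure_unitArc {P : ℕ → ProbabilityMeasure UnitAddCircle}
    (hP : ∀ h : ℤ, h ≠ 0 →
      Tendsto (fun N => ∫ t, fourier h t ∂(P N : Measure UnitAddCircle)) atTop (nhds 0))
    {a b : ℝ} (ha : 0 ≤ a) (hab : a ≤ b) (hb : b ≤ 1) :
    Tendsto (fun N => (P N : Measure UnitAddCircle).real (unitArc a b)) atTop (nhds (b - a)) := by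
  let P₀ : ProbabilityMeasure UnitAddCircle := ⟨volume, ⟨UnitAddCircle.measure_univ⟩⟩
  have hweak : Tendsto P atTop (nhds P₀) := by
    refine tendsto_of_tendsto_integral_fourier fun h => ?_
    rcases eq_or_ne h 0 with rfl | hh
    · simp
    · exact (integral_fourier_of_ne_zero hh).symm ▸ hP h hh
  have harc : (P₀ : Measure UnitAddCircle) (unitArc a b) = ENNReal.ofReal (b - a) :=
    volume_unitArc ha hb
  have := (ENNReal.tendsto_toReal (measure_ne_top _ _)).comp
    (ProbabilityMeasure.tendsto_measure_of_null_frontier_of_tendsto' hweak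
      (volume_frontier_unitArc hab))
  rwa [harc, ENNReal.toReal_ofReal (sub_nonneg.2 hab)] at this

theorem equidistributedMod1_of_tendsto_sum_fourier
    (hx : ∀ h : ℤ, h ≠ 0 → Tendsto
      (fun N : ℕ => (∑ n ∈ Finset.Icc 1 N, fourier h (x n : UnitAddCircle)) / N) atTop (nhds 0)) :
    EquidistributedMod1 x := by
  classical
  intro a b ha hab hb
  let y (n : ℕ) : UnitAddCircle := x n
  let P (N : ℕ) : ProbabilityMeasure UnitAddCircle :=
    ⟨empiricalMeasure (Finset.Icc 1 (N + 1)) y,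
      isProbabilityMeasure_empiricalMeasure (Finset.nonempty_Icc.2 (by simp)) y⟩
  have hP (h : ℤ) (hh : h ≠ 0) :
      Tendsto (fun N => ∫ t, fourier h t ∂(P N : Measure UnitAddCircle)) atTop (nhds 0) := by
    refine ((tendsto_add_atTop_iff_nat 1).2 (hx h hh)).congr fun N => ?_
    simp [P, y, integral_empiricalMeasure, div_eq_inv_mul]
  refine (tendsto_add_atTop_iff_nat 1).1
    ((tendsto_measureReal_empiricalMeasure_unitArc hP ha hab hb).congr fun N => ?_)
  simp [P, y, measureReal_empiricalMeasure _ _ measurableSet_unitArc, coe_mem_unitArc_iff]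

end Weyl

section Decay

theorem isBigO_top_of_isBigO_cocompact {α E : Type*} [TopologicalSpace α]
    [SeminormedAddCommGroup E] {f : α → E} {g : α → ℝ} {M : ℝ} (hf : ∀ x, ‖f x‖ ≤ M)
    (hg : Continuous g) (hg₀ : ∀ x, g x ≠ 0) (hfg : f =O[cocompact α] g) : f =O[⊤] g := by
  obtain ⟨c, hc⟩ := hfg.bound
  obtain ⟨S, hS, hSc⟩ := mem_cocompact.1 hc
  have hfar : f =O[𝓟 Sᶜ] g := IsBigO.of_bound c (eventually_principal.2 hSc)
  have hnear : f =O[𝓟 S] g :=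
    (isBigO_of_le' (c := M) _ fun x => by simpa using hf x).trans
      (hg.continuousOn.isBigO_rev_principal hS (fun x _ => hg₀ x) (1 : ℝ))
  simpa [sup_principal] using hfar.sup hnear

theorem abs_rpow_neg_isBigO_one_add_abs_rpow_neg {γ δ : ℝ} (hδ : 0 ≤ δ) (hδγ : δ ≤ γ) :
    (fun t : ℝ => |t| ^ (-γ)) =O[cocompact ℝ] fun t => (1 + |t|) ^ (-δ) := by
  refine IsBigO.of_bound (2 ^ δ) ?_
  filter_upwards [tendsto_norm_cocompact_atTop.eventually_ge_atTop 1] with t (ht : 1 ≤ |t|)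
  rw [norm_of_nonneg (by positivity), norm_of_nonneg (by positivity)]
  calc |t| ^ (-γ) ≤ |t| ^ (-δ) := rpow_le_rpow_of_exponent_le ht (by linarith)
    _ ≤ ((1 + |t|) / 2) ^ (-δ) := rpow_le_rpow_of_nonpos (by positivity) (by linarith) (by linarith)
    _ = 2 ^ δ * (1 + |t|) ^ (-δ) := by
      rw [div_rpow (by positivity) (by norm_num), rpow_neg (zero_le_two (α := ℝ)), div_inv_eq_mul,
        mul_comm]

theorem charFun_isBigO_of_integral_exp {μ : Measure ℝ} {γ : ℝ}
    (hdecay : (fun ξ : ℝ => ∫ t, Complex.exp (2 * Real.pi * Complex.I * ξ * t) ∂μ)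
      =O[cocompact ℝ] fun ξ : ℝ => |ξ| ^ (-γ)) :
    charFun μ =O[cocompact ℝ] fun t => |t| ^ (-γ) := by
  have hscale : Tendsto (fun t : ℝ => t * (2 * π)⁻¹) (cocompact ℝ) (cocompact ℝ) :=
    (Homeomorph.mulRight₀ (2 * π)⁻¹ (by positivity)).isClosedEmbedding.tendsto_cocompact
  refine ((hdecay.comp_tendsto hscale).congr_left fun t => ?_).trans
    (isBigO_of_le' (c := (2 * π) ^ γ) _ fun t => ?_)
  · rw [charFun_apply_real]
    refine integral_congr_ae (ae_of_all _ fun x => ?_)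
    push_cast
    field_simp
  · rw [Function.comp_apply, norm_of_nonneg (by positivity), norm_of_nonneg (by positivity),
      abs_mul, mul_rpow (by positivity) (by positivity), abs_of_pos (inv_pos.2 two_pi_pos),
      inv_rpow two_pi_pos.le, rpow_neg two_pi_pos.le, inv_inv, mul_comm]

theorem exists_norm_charFun_sub_le {μ : Measure ℝ} [IsFiniteMeasure μ] {γ δ : ℝ} (hδ : 0 ≤ δ)
    (hδγ : δ ≤ γ) (hμ : charFun μ =O[cocompact ℝ] fun t => |t| ^ (-γ)) {ι : Type*}
    [PseudoMetricSpace ι] {K : NNReal} {a : ι → ℝ} (ha : AntilipschitzWith K a) :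
    ∃ C, 0 ≤ C ∧ ∀ i j, ‖charFun μ (a i - a j)‖ ≤ C * (1 + dist i j) ^ (-δ) := by
  have hbound : charFun μ =O[⊤] fun t => (1 + |t|) ^ (-δ) :=
    isBigO_top_of_isBigO_cocompact norm_charFun_le
      ((continuous_const.add continuous_abs).rpow_const fun t =>
        Or.inl (show 1 + |t| ≠ 0 by positivity))
      (fun t => by positivity) (hμ.trans (abs_rpow_neg_isBigO_one_add_abs_rpow_neg hδ hδγ))
  obtain ⟨C, hC, hbound⟩ := hbound.exists_nonneg
  refine ⟨C * (1 + K) ^ δ, by positivity, fun i j => ?_⟩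
  have hsep : (1 + dist i j) / (1 + K) ≤ 1 + |a i - a j| := by
    rw [div_le_iff₀ (by positivity), ← Real.dist_eq]
    nlinarith [ha.le_mul_dist i j, dist_nonneg (x := a i) (y := a j), K.2]
  calc ‖charFun μ (a i - a j)‖ ≤ C * (1 + |a i - a j|) ^ (-δ) := by
        simpa [norm_of_nonneg (show 0 ≤ (1 + |a i - a j|) ^ (-δ) by positivity)] using
          isBigOWith_top.1 hbound (a i - a j)
    _ ≤ C * ((1 + dist i j) / (1 + K)) ^ (-δ) := by
        gcongr C * ?_
        exact rpow_le_rpow_of_nonpos (by positivity) hsep (by linarith)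
    _ = C * (1 + K) ^ δ * (1 + dist i j) ^ (-δ) := by
        rw [div_rpow (by positivity) (by positivity), rpow_neg (by positivity : (0 : ℝ) ≤ 1 + K)]
        field_simp

end Decay

section Sums

theorem sum_range_one_add_rpow_neg_le {δ : ℝ} (hδ₀ : 0 ≤ δ) (hδ₁ : δ ≤ 1) (N : ℕ) :
    (1 - δ) * ∑ k ∈ Finset.range N, (1 + (k : ℝ)) ^ (-δ) ≤ (N : ℝ) ^ (1 - δ) := by
  induction N with
  | zero => simpa using zero_rpow_nonneg _
  | succ N ih =>
    have hN : (0 : ℝ) < N + 1 := by positivity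
    have hbernoulli : (N / (N + 1) : ℝ) ^ (1 - δ) ≤ 1 + (1 - δ) * (-1 / (N + 1)) := by
      convert rpow_one_add_le_one_add_mul_self (s := -1 / (N + 1 : ℝ)) _ (sub_nonneg.2 hδ₁)
        (sub_le_self 1 hδ₀) using 2
      · field_simp
        ring
      · rw [le_div_iff₀ hN]
        linarith [N.cast_nonneg (α := ℝ)]
    have hpow : (N + 1 : ℝ) ^ (1 - δ) = (N + 1) * (N + 1 : ℝ) ^ (-δ) := by
      rw [sub_eq_add_neg, rpow_add hN, rpow_one]
    have hstep : (N : ℝ) ^ (1 - δ) ≤ (N + 1 : ℝ) ^ (1 - δ) - (1 - δ) * (N + 1 : ℝ) ^ (-δ) := by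
      rw [div_rpow N.cast_nonneg hN.le, div_le_iff₀ (by positivity)] at hbernoulli
      refine hbernoulli.trans_eq ?_
      rw [hpow]
      field_simp
      ring
    rw [Finset.sum_range_succ, mul_add, add_comm 1 (N : ℝ)]
    push_cast
    linarith

theorem sum_Icc_sum_Icc_dist_le {g : ℝ → ℝ} (hg : ∀ k : ℕ, 0 ≤ g k) (N : ℕ) :
    ∑ m ∈ Finset.Icc 1 N, ∑ n ∈ Finset.Icc 1 N, g (dist m n) ≤
      2 * N * ∑ k ∈ Finset.range N, g k := by
  induction N with
  | zero => simp
  | succ N ih =>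
    have hcol : ∑ m ∈ Finset.Icc 1 N, g (dist m (N + 1)) = ∑ k ∈ Finset.range N, g (k + 1 : ℕ) := by
      refine Finset.sum_nbij' (N - ·) (N - ·) ?_ ?_ ?_ ?_ fun m hm => ?_
      any_goals grind
      have hmN : m ≤ N + 1 := (Finset.mem_Icc.1 hm).2.trans N.le_succ
      rw [Nat.dist_eq, abs_sub_comm, ← Nat.cast_sub hmN, Nat.abs_cast, Nat.sub_add_comm]
      exact (Finset.mem_Icc.1 hm).2
    have hrow : ∑ n ∈ Finset.Icc 1 N, g (dist (N + 1) n) = ∑ k ∈ Finset.range N, g (k + 1 : ℕ) := by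
      simpa only [dist_comm] using hcol
    have hsplit : ∑ k ∈ Finset.range (N + 1), g k =
        ∑ k ∈ Finset.range N, g (k + 1 : ℕ) + g 0 := by
      simpa using Finset.sum_range_succ' (fun k => g k) N
    have hmono : ∑ k ∈ Finset.range N, g k ≤ ∑ k ∈ Finset.range (N + 1), g k :=
      Finset.sum_le_sum_of_subset_of_nonneg (by simp) fun k _ _ => hg k
    simp only [Finset.sum_Icc_succ_top (Nat.le_add_left 1 N), Finset.sum_add_distrib, hcol, hrow,
      dist_self]
    have hg₀ : 0 ≤ g 0 := mod_cast hg 0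
    have hN : 0 ≤ 2 * (N : ℝ) := by positivity
    have hgrow := mul_le_mul_of_nonneg_left hmono hN
    rw [Nat.cast_succ]
    linarith

end Sums

section ExponentialSums

/-- The exponential sum `∑_{n ∈ s} e^{i a(n) x}`, as a function of `x`. With `a n = 2π h s_n` these
are the Weyl sums that decide whether `(s_n x)` is equidistributed modulo 1. -/
noncomputable def expSum {ι : Type*} (a : ι → ℝ) (s : Finset ι) (x : ℝ) : ℂ :=
  ∑ n ∈ s, Complex.exp (a n * x * Complex.I)

theorem norm_exp_ofReal_mul_ofReal_mul_I (t x : ℝ) : ‖Complex.exp (t * x * Complex.I)‖ = 1 :=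
  mod_cast Complex.norm_exp_ofReal_mul_I (t * x)

variable {ι : Type*} {a : ι → ℝ} {s : Finset ι} {μ : Measure ℝ}

theorem continuous_expSum : Continuous (expSum a s) := by
  unfold expSum
  fun_prop

theorem norm_expSum_le (x : ℝ) : ‖expSum a s x‖ ≤ s.card :=
  (norm_sum_le _ _).trans_eq (by simp [norm_exp_ofReal_mul_ofReal_mul_I])

theorem ofReal_norm_expSum_sq (x : ℝ) : ((‖expSum a s x‖ ^ 2 : ℝ) : ℂ) =
    ∑ m ∈ s, ∑ n ∈ s, Complex.exp ((a m - a n : ℝ) * x * Complex.I) := by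
  rw [Complex.ofReal_pow, ← Complex.mul_conj', expSum, map_sum, Finset.sum_mul_sum]
  refine Finset.sum_congr rfl fun m _ => Finset.sum_congr rfl fun n _ => ?_
  rw [← Complex.exp_conj, ← Complex.exp_add]
  congr 1
  simp only [map_mul, Complex.conj_ofReal, Complex.conj_I, Complex.ofReal_sub]
  ring

theorem integral_norm_expSum_sq_le [IsFiniteMeasure μ] :
    ∫ x, ‖expSum a s x‖ ^ 2 ∂μ ≤ ∑ m ∈ s, ∑ n ∈ s, ‖charFun μ (a m - a n)‖ := by
  have hint (t : ℝ) : Integrable (fun x : ℝ => Complex.exp (t * x * Complex.I)) μ :=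
    (integrable_const (1 : ℝ)).mono' (by fun_prop)
      (ae_of_all _ fun x => (norm_exp_ofReal_mul_ofReal_mul_I t x).le)
  have hsq : ((∫ x, ‖expSum a s x‖ ^ 2 ∂μ : ℝ) : ℂ) =
      ∑ m ∈ s, ∑ n ∈ s, charFun μ (a m - a n) := by
    rw [← integral_complex_ofReal]
    simp_rw [ofReal_norm_expSum_sq, charFun_apply_real]
    rw [integral_finsetSum _ fun m _ => integrable_finsetSum _ fun n _ => hint _]
    exact Finset.sum_congr rfl fun m _ => integral_finsetSum _ fun n _ => hint _
  calc ∫ x, ‖expSum a s x‖ ^ 2 ∂μ ≤ ‖((∫ x, ‖expSum a s x‖ ^ 2 ∂μ : ℝ) : ℂ)‖ := by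
        rw [Complex.norm_real]
        exact le_abs_self _
    _ ≤ ∑ m ∈ s, ∑ n ∈ s, ‖charFun μ (a m - a n)‖ := by
        rw [hsq]
        exact (norm_sum_le _ _).trans (Finset.sum_le_sum fun m _ => norm_sum_le _ _)

end ExponentialSums

section AlmostEverywhere

theorem ae_tendsto_zero_of_summable_integral_norm_sq {α E : Type*} [MeasurableSpace α]
    [NormedAddCommGroup E] {μ : Measure α} {f : ℕ → α → E} (hf : ∀ k, MemLp (f k) 2 μ)
    (hsum : Summable fun k => ∫ x, ‖f k x‖ ^ 2 ∂μ) :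
    ∀ᵐ x ∂μ, Tendsto (fun k => f k x) atTop (nhds 0) := by
  have hnorm (k : ℕ) : eLpNorm (fun x => ‖f k x‖ ^ 2) 1 μ =
      ENNReal.ofReal (∫ x, ‖f k x‖ ^ 2 ∂μ) := by
    rw [eLpNorm_one_eq_lintegral_enorm,
      ← ofReal_integral_norm_eq_lintegral_enorm ((hf k).integrable_norm_pow two_ne_zero)]
    simp
  have hsummable := summable_norm_of_tsum_eLpNorm_ne_top le_rfl
    (fun k => ((hf k).1.norm.pow 2)) ((tsum_congr hnorm).trans_ne hsum.tsum_ofReal_ne_top)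
  filter_upwards [hsummable] with x hx
  simpa [tendsto_zero_iff_norm_tendsto_zero] using hx.tendsto_atTop_zero.sqrt

end AlmostEverywhere

section Interpolation

variable {p : ℕ}

theorem tendsto_average_of_tendsto_average_pow_real (hp : p ≠ 0) {c : ℕ → ℝ} (hc : ∀ n, |c n| ≤ 1)
    (hlim : Tendsto (fun k : ℕ => (∑ n ∈ Finset.Icc 1 (k ^ p), c n) / (k ^ p : ℕ))
      atTop (nhds 0)) :
    Tendsto (fun N : ℕ => (∑ n ∈ Finset.Icc 1 N, c n) / N) atTop (nhds 0) := by
  have hmono : Monotone fun N => ∑ n ∈ Finset.Icc 1 N, (1 + c n) := fun M N hMN =>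
    Finset.sum_le_sum_of_subset_of_nonneg (Finset.Icc_subset_Icc_right hMN) fun n _ _ => by
      linarith [neg_le_of_abs_le (hc n)]
  have hshift {N : ℕ} (hN : N ≠ 0) : (∑ n ∈ Finset.Icc 1 N, (1 + c n)) / (N : ℝ) =
      1 + (∑ n ∈ Finset.Icc 1 N, c n) / N := by
    rw [Finset.sum_add_distrib, add_div]
    simp [hN]
  have hratio : Tendsto (fun k : ℕ => (1 + 1 / (k : ℝ)) ^ p) atTop (nhds 1) := by
    simpa using ((tendsto_one_div_atTop_nhds_zero_nat (𝕜 := ℝ)).const_add 1).pow p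
  have hpow : Tendsto (fun k : ℕ => k ^ p) atTop atTop := tendsto_pow_atTop hp
  have hone : Tendsto (fun N : ℕ => (∑ n ∈ Finset.Icc 1 N, (1 + c n)) / (N : ℝ)) atTop
      (nhds 1) := by
    refine tendsto_div_of_monotone_of_exists_subseq_tendsto_div _ 1 hmono fun r hr =>
      ⟨fun k => k ^ p, ?_, hpow, ?_⟩
    · filter_upwards [hratio.eventually_lt_const hr, eventually_ne_atTop 0] with k hk hk₀
      calc (((k + 1) ^ p : ℕ) : ℝ) = (1 + 1 / (k : ℝ)) ^ p * (k ^ p : ℕ) := by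
            push_cast
            rw [← mul_pow]
            field_simp
        _ ≤ r * (k ^ p : ℕ) := by gcongr
    · refine Tendsto.congr' ?_ (by simpa only [add_zero] using hlim.const_add 1)
      filter_upwards [eventually_ne_atTop 0] with k hk
      rw [hshift (pow_ne_zero p hk)]
  refine Tendsto.congr' ?_ (by simpa using hone.sub_const 1)
  filter_upwards [eventually_ne_atTop 0] with N hN
  rw [hshift hN]
  ring

theorem tendsto_average_of_tendsto_average_pow (hp : p ≠ 0) {c : ℕ → ℂ} (hc : ∀ n, ‖c n‖ ≤ 1)
    (hlim : Tendsto (fun k : ℕ => (∑ n ∈ Finset.Icc 1 (k ^ p), c n) / (k ^ p : ℕ))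
      atTop (nhds 0)) :
    Tendsto (fun N : ℕ => (∑ n ∈ Finset.Icc 1 N, c n) / N) atTop (nhds 0) := by
  have hre := tendsto_average_of_tendsto_average_pow_real hp
    (fun n => (Complex.abs_re_le_norm _).trans (hc n))
    (((Complex.continuous_re.tendsto 0).comp hlim).congr fun k => by
      rw [Function.comp_apply, Complex.div_natCast_re, Complex.re_sum])
  have him := tendsto_average_of_tendsto_average_pow_real hp
    (fun n => (Complex.abs_im_le_norm _).trans (hc n))
    (((Complex.continuous_im.tendsto 0).comp hlim).congr fun k => by
      rw [Function.comp_apply, Complex.div_natCast_im, Complex.im_sum])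
  refine squeeze_zero_norm (fun N => Complex.norm_le_abs_re_add_abs_im _) ?_
  simpa [Complex.div_natCast_re, Complex.div_natCast_im] using hre.abs.add him.abs

end Interpolation

section Equidistribution

variable {μ : Measure ℝ} [IsFiniteMeasure μ] {a : ℕ → ℝ} {C δ : ℝ}

theorem integral_norm_expSum_Icc_sq_le (hδ₀ : 0 ≤ δ) (hδ₁ : δ ≤ 1) (hC : 0 ≤ C)
    (hμ : ∀ m n, ‖charFun μ (a m - a n)‖ ≤ C * (1 + dist m n) ^ (-δ)) (N : ℕ) :
    (1 - δ) * ∫ x, ‖expSum a (Finset.Icc 1 N) x‖ ^ 2 ∂μ ≤ 2 * C * (N * (N : ℝ) ^ (1 - δ)) := by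
  have : 0 ≤ 1 - δ := sub_nonneg.2 hδ₁
  calc (1 - δ) * ∫ x, ‖expSum a (Finset.Icc 1 N) x‖ ^ 2 ∂μ
      ≤ (1 - δ) * ∑ m ∈ Finset.Icc 1 N, ∑ n ∈ Finset.Icc 1 N, C * (1 + dist m n) ^ (-δ) := by
        gcongr
        exact integral_norm_expSum_sq_le.trans (by gcongr; exact hμ _ _)
    _ = (1 - δ) * (C * ∑ m ∈ Finset.Icc 1 N, ∑ n ∈ Finset.Icc 1 N, (1 + dist m n) ^ (-δ)) := by
        simp_rw [Finset.mul_sum]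
    _ ≤ (1 - δ) * (C * (2 * N * ∑ k ∈ Finset.range N, (1 + (k : ℝ)) ^ (-δ))) := by
        gcongr
        exact sum_Icc_sum_Icc_dist_le (g := fun t => (1 + t) ^ (-δ)) (fun k => by positivity) N
    _ = 2 * C * (N * ((1 - δ) * ∑ k ∈ Finset.range N, (1 + (k : ℝ)) ^ (-δ))) := by ring
    _ ≤ 2 * C * (N * (N : ℝ) ^ (1 - δ)) := by
        gcongr
        exact sum_range_one_add_rpow_neg_le hδ₀ hδ₁ N

theorem integral_norm_expSum_Icc_div_sq_le (hδ₀ : 0 ≤ δ) (hδ₁ : δ < 1) (hC : 0 ≤ C)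
    (hμ : ∀ m n, ‖charFun μ (a m - a n)‖ ≤ C * (1 + dist m n) ^ (-δ)) (N : ℕ) :
    ∫ x, ‖expSum a (Finset.Icc 1 N) x / N‖ ^ 2 ∂μ ≤ 2 * C / (1 - δ) * (N : ℝ) ^ (-δ) := by
  have hδ : 0 < 1 - δ := sub_pos.2 hδ₁
  rcases N.eq_zero_or_pos with rfl | hN₀
  · simpa using show 0 ≤ 2 * C / (1 - δ) * (0 : ℝ) ^ (-δ) by positivity
  have hN : (0 : ℝ) < N := Nat.cast_pos.2 hN₀
  simp_rw [norm_div, div_pow, Complex.norm_natCast]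
  rw [integral_div, div_le_iff₀ (by positivity), div_mul_eq_mul_div, div_mul_eq_mul_div,
    le_div_iff₀' hδ]
  refine (integral_norm_expSum_Icc_sq_le hδ₀ hδ₁.le hC hμ N).trans_eq ?_
  rw [sub_eq_add_neg, rpow_add hN, rpow_one]
  ring

theorem ae_tendsto_expSum_Icc_div (hδ₀ : 0 < δ) (hδ₁ : δ < 1) (hC : 0 ≤ C)
    (hμ : ∀ m n, ‖charFun μ (a m - a n)‖ ≤ C * (1 + dist m n) ^ (-δ)) :
    ∀ᵐ x ∂μ, Tendsto (fun N : ℕ => expSum a (Finset.Icc 1 N) x / N) atTop (nhds 0) := by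
  obtain ⟨p, hp⟩ := exists_nat_gt (1 / δ)
  have hpδ : 1 < p * δ := (div_lt_iff₀ hδ₀).1 hp
  have hp₀ : p ≠ 0 := by
    rintro rfl
    norm_num at hpδ
  let f (k : ℕ) (x : ℝ) : ℂ := expSum a (Finset.Icc 1 (k ^ p)) x / (k ^ p : ℕ)
  have hf (k : ℕ) : MemLp (f k) 2 μ :=
    .of_bound (continuous_expSum.div_const _).aestronglyMeasurable 1 <| ae_of_all _ fun x => by
      rw [norm_div, Complex.norm_natCast]
      exact div_le_one_of_le₀ (by simpa using norm_expSum_le (a := a) (s := .Icc 1 (k ^ p)) x)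
        (Nat.cast_nonneg _)
  have hmoment (k : ℕ) : ∫ x, ‖f k x‖ ^ 2 ∂μ ≤ 2 * C / (1 - δ) * (k : ℝ) ^ (-(p * δ)) := by
    refine (integral_norm_expSum_Icc_div_sq_le hδ₀.le hδ₁ hC hμ (k ^ p)).trans_eq ?_
    rw [Nat.cast_pow, ← rpow_natCast_mul k.cast_nonneg, mul_neg]
  have hsum : Summable fun k => ∫ x, ‖f k x‖ ^ 2 ∂μ :=
    .of_nonneg_of_le (fun k => integral_nonneg fun x => by positivity) hmoment
      ((summable_nat_rpow.2 (neg_lt_neg hpδ)).mul_left _)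
  filter_upwards [ae_tendsto_zero_of_summable_integral_norm_sq hf hsum] with x hx
  exact tendsto_average_of_tendsto_average_pow hp₀
    (fun n => (norm_exp_ofReal_mul_ofReal_mul_I _ x).le) hx

end Equidistribution

theorem antilipschitzWith_const_mul {α : Type*} [PseudoMetricSpace α] {K : NNReal} {s : α → ℝ}
    (hs : AntilipschitzWith K s) {c : ℝ} (hc : 1 ≤ |c|) : AntilipschitzWith K fun n => c * s n :=
  .of_le_mul_dist fun m n => (hs.le_mul_dist m n).trans <| by
    gcongr
    rw [Real.dist_eq, Real.dist_eq, ← mul_sub, abs_mul]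
    exact le_mul_of_one_le_left (abs_nonneg _) hc

theorem antilipschitzWith_natCast_of_strictMono {s : ℕ → ℕ} (hs : StrictMono s) :
    AntilipschitzWith 1 fun n => (s n : ℝ) :=
  .of_le_mul_dist fun m n => by
    wlog h : n ≤ m generalizing m n
    · simpa only [dist_comm] using this n m (le_of_not_ge h)
    have hgap : (m - n : ℝ) + s n ≤ s m := by
      exact_mod_cast Nat.sub_add_cancel h ▸ hs.add_le_nat (m - n) n
    rw [Nat.dist_eq, abs_of_nonneg (sub_nonneg.2 (Nat.cast_le.2 h)), NNReal.coe_one, one_mul,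
      Real.dist_eq]
    exact (le_sub_iff_add_le.2 hgap).trans (le_abs_self _)

theorem stmt4_general (μ : Measure ℝ) [IsFiniteMeasure μ] {γ : ℝ} (hγ : 0 < γ)
    (hdecay : (fun ξ : ℝ => ∫ t, Complex.exp (2 * Real.pi * Complex.I * ξ * t) ∂μ)
      =O[Filter.cocompact ℝ] fun ξ : ℝ => |ξ| ^ (-γ))
    {s : ℕ → ℝ} {K : NNReal} (hs : AntilipschitzWith K s) :
    ∀ᵐ x ∂μ, EquidistributedMod1 fun n => s n * x := by
  let δ := min γ (1 / 2)
  have hδ₀ : 0 < δ := lt_min hγ (by norm_num)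
  have hδ₁ : δ < 1 := (min_le_right _ _).trans_lt (by norm_num)
  have hsum (h : ℤ) (hh : h ≠ 0) : ∀ᵐ x ∂μ, Tendsto
      (fun N : ℕ => expSum (fun n => 2 * π * h * s n) (Finset.Icc 1 N) x / N) atTop (nhds 0) := by
    have hfreq : 1 ≤ |2 * π * h| := by
      rw [abs_mul, abs_of_pos two_pi_pos]
      have : (1 : ℝ) ≤ |(h : ℝ)| := mod_cast Int.one_le_abs hh
      nlinarith [two_le_pi]
    obtain ⟨C, hC, hμ⟩ := exists_norm_charFun_sub_le hδ₀.le (min_le_left _ _)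
      (charFun_isBigO_of_integral_exp hdecay) (antilipschitzWith_const_mul hs hfreq)
    exact ae_tendsto_expSum_Icc_div hδ₀ hδ₁ hC hμ
  filter_upwards [ae_all_iff.2 fun h => ae_all_iff.2 (hsum h)] with x hx
  refine equidistributedMod1_of_tendsto_sum_fourier fun h hh => (hx h hh).congr fun N => ?_
  simp only [expSum, fourier_coe_apply]
  congr! 3
  push_cast
  ring

/-- if the Fourier transform of a Borel probability measure `μ` on `ℝ` has
power decay `O(|ξ|^{-γ})` at infinity for some `γ > 0`, then for every strictly increasing
sequence of positive integers `(s n)`, `(s n * x)` is equidistributed mod 1 for `μ`-a.e. `x`;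
in particular `μ`-a.e. `x` is normal in every integer base `b ≥ 2`. -/
theorem stmt4
    (μ : Measure ℝ) [IsProbabilityMeasure μ]
    (γ : ℝ) (hγ : 0 < γ)
    (hdecay : (fun ξ : ℝ => ∫ t, Complex.exp (2 * Real.pi * Complex.I * ξ * t) ∂μ)
      =O[Filter.cocompact ℝ] fun ξ : ℝ => |ξ| ^ (-γ)) :
    (∀ s : ℕ → ℕ, StrictMono s → (∀ n, 0 < s n) →
      ∀ᵐ x ∂μ, EquidistributedMod1 (fun n => (s n : ℝ) * x)) ∧
    (∀ᵐ x ∂μ, ∀ b : ℕ, 2 ≤ b →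
      EquidistributedMod1 (fun n => (b : ℝ) ^ n * x)) := by
  refine ⟨fun s hs _ => stmt4_general μ hγ hdecay (antilipschitzWith_natCast_of_strictMono hs),
    ae_all_iff.2 fun b => ae_all_iff.2 fun hb => ?_⟩
  simpa only [Nat.cast_pow] using
    stmt4_general μ hγ hdecay (antilipschitzWith_natCast_of_strictMono (pow_right_strictMono₀ hb))
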